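/- arXiv:2007.14917 — 3 statements merged into one kernel-verified Lean document; each statement's English description precedes it below -/
import Mathlib

section
/- For d×d real positive definite matrices X and Y, the Jensen-Bregman LogDet divergence J_ld(X,Y) := log det((X+Y)/2) − (1/2)·log det(X·Y) is nonnegative. -/
/-!
The inequality is the midpoint log-concavity of the determinant, in the form
`det X * det Y ≤ det ((X + Y) / 2) ^ 2`. Factor `X = Bᴴ B` with `B` invertible and put
`Z = B⁻ᴴ Y B⁻¹`, which is positive definite with `Y = Bᴴ Z B`. After cancelling the powers of
`det B`, the claim reads `det Z ≤ det ((1 + Z) / 2) ^ 2`. It factors over the eigenvalues `z > 0`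
of `Z`, each factor being the arithmetic-geometric mean inequality `z ≤ ((1 + z) / 2) ^ 2`.
-/

open Matrix

/-- The Jensen-Bregman LogDet divergence
`J_ld(X,Y) = log det((X+Y)/2) − (1/2)·log det(X·Y)`. -/
noncomputable def Jld {d : ℕ} (X Y : Matrix (Fin d) (Fin d) ℝ) : ℝ :=
  Real.log ((2 : ℝ)⁻¹ • (X + Y)).det - (1 / 2) * Real.log (X * Y).det

/-- The identity is the characteristic polynomial of `Z`, split over its eigenvalues, evaluated at
`-1`. -/
lemma det_one_add_eq_prod_eigenvalues {d : ℕ} {Z : Matrix (Fin d) (Fin d) ℝ}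
    (hZ : Z.IsHermitian) : (1 + Z).det = ∏ i, (1 + hZ.eigenvalues i) := by
  have h := Matrix.eval_charpoly Z (-1)
  have e : Matrix.scalar (Fin d) (-1 : ℝ) - Z = -(1 + Z) := by
    rw [map_neg, map_one]; abel
  have e' : ∀ i, (-1 : ℝ) - hZ.eigenvalues i = -1 * (1 + hZ.eigenvalues i) := fun i => by ring
  rw [e, Matrix.det_neg, hZ.charpoly_eq, Polynomial.eval_prod] at h
  simp only [Polynomial.eval_sub, Polynomial.eval_X, Polynomial.eval_C, RCLike.ofReal_real_eq_id,
    id, e', Finset.prod_mul_distrib, Finset.prod_const, Finset.card_univ] at h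
  exact (mul_left_cancel₀ (pow_ne_zero _ (by norm_num)) h).symm

/-- The case `X = 1` of `det X * det Y ≤ det ((X + Y) / 2) ^ 2`. -/
lemma det_le_det_half_one_add_sq {d : ℕ} {Z : Matrix (Fin d) (Fin d) ℝ} (hZ : Z.PosDef) :
    Z.det ≤ ((2 : ℝ)⁻¹ • (1 + Z)).det ^ 2 := by
  have h2 : (2⁻¹ : ℝ) ^ Fintype.card (Fin d) = ∏ _i : Fin d, (2⁻¹ : ℝ) := by simp
  rw [Matrix.det_smul, det_one_add_eq_prod_eigenvalues hZ.1, hZ.1.det_eq_prod_eigenvalues, h2,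
    ← Finset.prod_mul_distrib, ← Finset.prod_pow]
  refine Finset.prod_le_prod (fun i _ => (hZ.eigenvalues_pos i).le) fun i _ => ?_
  simp only [RCLike.ofReal_real_eq_id, id]
  nlinarith [sq_nonneg (1 - hZ.1.eigenvalues i)]

open scoped MatrixOrder in
lemma exists_isUnit_eq_star_mul_self {d : ℕ} {X : Matrix (Fin d) (Fin d) ℝ} (hX : X.PosDef) :
    ∃ B : Matrix (Fin d) (Fin d) ℝ, IsUnit B ∧ X = star B * B := by
  obtain ⟨B, hB⟩ := CStarAlgebra.nonneg_iff_eq_star_mul_self.mp hX.posSemidef.nonneg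
  refine ⟨B, ?_, hB⟩
  have h := (Matrix.isUnit_iff_isUnit_det _).mp hX.isUnit
  rw [hB, Matrix.det_mul] at h
  exact (Matrix.isUnit_iff_isUnit_det _).mpr (isUnit_of_mul_isUnit_right h)

lemma det_mul_det_le_det_midpoint_sq {d : ℕ} {X Y : Matrix (Fin d) (Fin d) ℝ}
    (hX : X.PosDef) (hY : Y.PosDef) :
    X.det * Y.det ≤ ((2 : ℝ)⁻¹ • (X + Y)).det ^ 2 := by
  obtain ⟨B, hB, rfl⟩ := exists_isUnit_eq_star_mul_self hX
  obtain ⟨Z, rfl⟩ : ∃ Z, Y = star B * Z * B := by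
    lift B to (Matrix (Fin d) (Fin d) ℝ)ˣ using hB
    refine ⟨star (↑B⁻¹ : Matrix (Fin d) (Fin d) ℝ) * Y *
      (↑B⁻¹ : Matrix (Fin d) (Fin d) ℝ), ?_⟩
    simp only [mul_assoc, Units.inv_mul, mul_one]
    rw [← mul_assoc, ← star_mul, Units.inv_mul, star_one, one_mul]
  have hZ := (Matrix.IsUnit.posDef_star_left_conjugate_iff hB).mp hY
  have e : (2 : ℝ)⁻¹ • (star B * B + star B * Z * B)
      = star B * ((2 : ℝ)⁻¹ • (1 + Z)) * B := by
    simp [mul_add, add_mul]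
  rw [e]
  simp only [Matrix.det_mul]
  have h := mul_le_mul_of_nonneg_left (det_le_det_half_one_add_sq hZ)
    (sq_nonneg ((star B).det * B.det))
  linarith

/-- For real positive definite matrices `X` and `Y`, `J_ld(X,Y) ≥ 0`. -/
theorem jld_nonneg {d : ℕ} (X Y : Matrix (Fin d) (Fin d) ℝ)
    (hX : X.PosDef) (hY : Y.PosDef) : 0 ≤ Jld X Y := by
  have hXY : 0 < (X * Y).det := by
    rw [Matrix.det_mul]; exact mul_pos hX.det_pos hY.det_pos
  have h := det_mul_det_le_det_midpoint_sq hX hY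
  rw [← Matrix.det_mul] at h
  have hlog := Real.log_le_log hXY h
  rw [Real.log_pow] at hlog
  push_cast at hlog
  unfold Jld
  linarith
end

section
/- For d×d real positive definite matrices X and Y, J_ld(X,Y) = 0 if and only if X = Y. -/
/-!
`J_ld(X,Y) = 0` says that `det ((X+Y)/2) ^ 2 = det X * det Y`, the equality case of the midpoint
log-concavity of the determinant. Writing `X = Bᴴ B` with `B` invertible and `Y = Bᴴ A B`, a
congruence (`sq_det_midpoint_eq_imp_eq`) reduces this to `X = 1`. There, with `λᵢ` the eigenvalues
of `A`, the equality reads `∏ ((1 + λᵢ)/2)² = ∏ λᵢ`. As `λᵢ ≤ ((1 + λᵢ)/2)²` with equality only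
for `λᵢ = 1`, all eigenvalues are `1`, so `A = 1` (`eq_one_of_sq_det_midpoint_eq`).
-/

open Matrix

theorem det_midpoint_one_eq_prod {n : Type*} [Fintype n] [DecidableEq n] {A : Matrix n n ℝ}
    (hA : A.IsHermitian) :
    ((2 : ℝ)⁻¹ • (1 + A)).det = ∏ i, (1 + hA.eigenvalues i) / 2 := by
  have h : (2 : ℝ)⁻¹ • (1 + A) = Unitary.conjStarAlgAut ℝ _ hA.eigenvectorUnitary
      ((2 : ℝ)⁻¹ • (1 + diagonal hA.eigenvalues)) := by
    have hs : A = Unitary.conjStarAlgAut ℝ _ hA.eigenvectorUnitary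
      (diagonal hA.eigenvalues) := hA.spectral_theorem
    rw [map_smul, map_add, map_one, ← hs]
  rw [h, Unitary.conjStarAlgAut_apply, det_mul_right_comm,
    Unitary.mul_star_self_of_mem hA.eigenvectorUnitary.2, one_mul,
    ← diagonal_one, diagonal_add, ← diagonal_smul, det_diagonal]
  refine Finset.prod_congr rfl fun i _ => ?_
  simp only [Pi.smul_apply, smul_eq_mul]
  ring

/-- The equality case of the determinant inequality when one of the matrices is the identity. -/
theorem eq_one_of_sq_det_midpoint_eq {n : Type*} [Fintype n] [DecidableEq n] {A : Matrix n n ℝ}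
    (hA : A.PosDef) (h : ((2 : ℝ)⁻¹ • (1 + A)).det ^ 2 = A.det) : A = 1 := by
  have hone : ∀ i, hA.1.eigenvalues i = 1 := by
    -- one eigenvalue different from `1` would make the product inequality strict
    by_contra! hne
    obtain ⟨i, hi⟩ := hne
    have hlt : ∏ i, hA.1.eigenvalues i < ∏ i, ((1 + hA.1.eigenvalues i) / 2) ^ 2 := by
      refine Finset.prod_lt_prod (fun j _ => hA.eigenvalues_pos j)
        (fun j _ => by nlinarith [sq_nonneg (hA.1.eigenvalues j - 1)])
        ⟨i, Finset.mem_univ i, ?_⟩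
      nlinarith [sq_pos_of_ne_zero (sub_ne_zero.mpr hi)]
    rw [Finset.prod_pow, ← det_midpoint_one_eq_prod, h, hA.1.det_eq_prod_eigenvalues] at hlt
    exact lt_irrefl _ hlt
  have hs : A = Unitary.conjStarAlgAut ℝ _ hA.1.eigenvectorUnitary
    (diagonal hA.1.eigenvalues) := hA.1.spectral_theorem
  rw [hs, funext hone, diagonal_one, map_one]

open scoped MatrixOrder in
/-- The equality case of the midpoint log-concavity of the determinant. -/
theorem sq_det_midpoint_eq_imp_eq {n : Type*} [Fintype n] [DecidableEq n] {X Y : Matrix n n ℝ}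
    (hX : X.PosDef) (hY : Y.PosDef)
    (h : ((2 : ℝ)⁻¹ • (X + Y)).det ^ 2 = (X * Y).det) : X = Y := by
  obtain ⟨B, hB⟩ := CStarAlgebra.nonneg_iff_eq_star_mul_self.mp hX.posSemidef.nonneg
  have hBu : IsUnit B := isUnit_of_mul_isUnit_right (hB ▸ hX.isUnit)
  have hB0 : B.det ≠ 0 := ((isUnit_iff_isUnit_det B).mp hBu).ne_zero
  obtain ⟨A, hA⟩ : ∃ A, Y = star B * A * B := by
    refine ⟨star B⁻¹ * Y * B⁻¹, ?_⟩
    have h1 : B⁻¹ * B = 1 := nonsing_inv_mul B ((isUnit_iff_isUnit_det B).mp hBu)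
    have h2 : star B * star B⁻¹ = 1 := by rw [← star_mul, h1, star_one]
    calc Y = (star B * star B⁻¹) * Y * (B⁻¹ * B) := by rw [h1, h2, one_mul, mul_one]
      _ = _ := by simp only [mul_assoc]
  have hAp : A.PosDef := hBu.posDef_star_left_conjugate_iff.mp (hA ▸ hY)
  have hstar : (star B).det = B.det := by
    rw [star_eq_conjTranspose, det_conjTranspose, star_trivial]
  have hM : (2 : ℝ)⁻¹ • (X + Y) = star B * ((2 : ℝ)⁻¹ • (1 + A)) * B := by
    rw [hA, hB, mul_smul_comm, smul_mul_assoc, mul_add, add_mul, mul_one]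
  have hA1 : A = 1 := by
    refine eq_one_of_sq_det_midpoint_eq hAp ?_
    rw [hM, hA, hB] at h
    simp only [det_mul, hstar] at h
    -- the congruence multiplies both sides by `det B ^ 4`
    exact mul_left_cancel₀ (pow_ne_zero 4 hB0) (by linear_combination h)
  rw [hA, hA1, mul_one, hB]

/-- For real positive definite matrices `X` and `Y`, `J_ld(X,Y) = 0 ↔ X = Y`. -/
theorem jld_eq_zero_iff {d : ℕ} (X Y : Matrix (Fin d) (Fin d) ℝ)
    (hX : X.PosDef) (hY : Y.PosDef) : Jld X Y = 0 ↔ X = Y := by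
  constructor
  · intro h
    have hM : 0 < ((2 : ℝ)⁻¹ • (X + Y)).det :=
      ((hX.add hY).smul (by norm_num : (0 : ℝ) < 2⁻¹)).det_pos
    have hXY : 0 < (X * Y).det := by
      rw [det_mul]
      exact mul_pos hX.det_pos hY.det_pos
    refine sq_det_midpoint_eq_imp_eq hX hY (Real.log_injOn_pos (pow_pos hM 2) hXY ?_)
    rw [Real.log_pow]
    unfold Jld at h
    push_cast
    linarith
  · rintro rfl
    have hM : (2 : ℝ)⁻¹ • (X + X) = X := by
      rw [← two_smul ℝ X, inv_smul_smul₀ two_ne_zero]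
    rw [Jld, hM, det_mul, Real.log_mul hX.det_pos.ne' hX.det_pos.ne']
    ring
end

section
/- The Jensen-Bregman LogDet divergence is invariant under matrix inversion: for all d×d real positive definite matrices X and Y, J_ld(X⁻¹, Y⁻¹) = J_ld(X,Y). -/
/-!
The factorization `X⁻¹ + Y⁻¹ = X⁻¹ (X + Y) Y⁻¹` gives
`det ((X⁻¹ + Y⁻¹) / 2) = det ((X + Y) / 2) / (det X * det Y)`, so inversion decreases the first
logarithm by `log (det X * det Y)`. It also changes the sign of `log det (X * Y)`, and half of the
resulting difference `2 * log (det X * det Y)` compensates exactly.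
-/

open Matrix

/-- The Jensen-Bregman LogDet divergence is invariant under matrix inversion. -/
theorem jld_inv_invariant {d : ℕ} (X Y : Matrix (Fin d) (Fin d) ℝ)
    (hX : X.PosDef) (hY : Y.PosDef) : Jld X⁻¹ Y⁻¹ = Jld X Y := by
  have hXd : X.det ≠ 0 := hX.det_pos.ne'
  have hYd : Y.det ≠ 0 := hY.det_pos.ne'
  have hSd : ((2 : ℝ)⁻¹ • (X + Y)).det ≠ 0 :=
    ((hX.add hY).smul (by norm_num : (0 : ℝ) < 2⁻¹)).det_pos.ne'
  have hfac : (2 : ℝ)⁻¹ • (X⁻¹ + Y⁻¹) = X⁻¹ * ((2 : ℝ)⁻¹ • (X + Y)) * Y⁻¹ := by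
    rw [Matrix.mul_smul, Matrix.smul_mul, Matrix.mul_add, Matrix.add_mul,
      Matrix.nonsing_inv_mul X hXd.isUnit, Matrix.one_mul, Matrix.mul_assoc,
      Matrix.mul_nonsing_inv Y hYd.isUnit, Matrix.mul_one, add_comm]
  unfold Jld
  rw [hfac]
  simp only [Matrix.det_mul, Matrix.det_nonsing_inv, Ring.inverse_eq_inv']
  rw [Real.log_mul (mul_ne_zero (inv_ne_zero hXd) hSd) (inv_ne_zero hYd),
    Real.log_mul (inv_ne_zero hXd) hSd,
    Real.log_mul (inv_ne_zero hXd) (inv_ne_zero hYd),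
    Real.log_mul hXd hYd, Real.log_inv, Real.log_inv]
  ring
end
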